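/- Let (t_k)_{k≥1} be a sequence of real numbers. Then (1/n)∑_{j=1}^n t_{p_j} converges as n → ∞ if and only if (1/N)∑_{j=1}^{π(N)} t_{p_j} log p_j converges as N → ∞. -/

import Mathlib

open Filter Finset

namespace PNT
open MeasureTheory Topology

lemma rl (f : ℝ → ℂ) : Tendsto (fun y : ℝ => ∫ t : ℝ, Complex.exp (t * y * Complex.I) * f t) atTop (𝓝 0) := by
  have h1 : Tendsto (fun y : ℝ => - y / (2 * Real.pi)) atTop (cocompact ℝ) := by
    refine Tendsto.mono_right ?_ atBot_le_cocompact
    exact (tendsto_neg_atTop_atBot).atBot_div_const (by positivity)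
  have := (Real.tendsto_integral_exp_smul_cocompact f).comp h1
  refine this.congr fun y => ?_
  simp only [Function.comp]
  refine integral_congr_ae (Eventually.of_forall fun t => ?_)
  simp only [Circle.smul_def, Real.fourierChar_apply, smul_eq_mul]
  congr 2
  push_cast
  have : (Real.pi : ℂ) ≠ 0 := by exact_mod_cast Real.pi_ne_zero
  field_simp

lemma fubini (β : ℝ → ℝ) (hm : Measurable β) (M : ℝ) (hM : ∀ u, |β u| ≤ M)
    (h0 : ∀ u ≤ 0, β u = 0) (h : ℝ → ℂ) (hc : Continuous h) (hs : HasCompactSupport h)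
    (ε : ℝ) (hε : 0 < ε) (y : ℝ) :
    ∫ t : ℝ, Complex.exp (t * y * Complex.I) * (h t * ∫ u : ℝ, β u * Complex.exp (-(ε + t * Complex.I) * u))
     = ∫ u : ℝ, β u * Complex.exp (-ε * u) * ∫ t : ℝ, Complex.exp (-(t * (u - y)) * Complex.I) * h t := by
  have hb : Integrable (fun u : ℝ => (β u : ℂ) * Complex.exp (-ε * u)) := by
    have : IntegrableOn (fun u : ℝ => (β u : ℂ) * Complex.exp (-ε * u)) (Set.Ioi 0) := by
      refine Integrable.bdd_mul (c := M) ?_ (by fun_prop) (Eventually.of_forall fun u => ?_)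
      · have := (exp_neg_integrableOn_Ioi 0 hε).ofReal (𝕜 := ℂ)
        simpa using this
      · simpa using hM u
    rw [← integrableOn_univ, ← Set.Iic_union_Ioi (a := (0:ℝ))]
    refine IntegrableOn.union ?_ this
    refine integrableOn_zero.congr_fun (fun u hu => ?_) measurableSet_Iic
    simp [h0 u hu]
  have hh : Integrable h := hc.integrable_of_hasCompactSupport hs
  have hp := hh.mul_prod hb
  have hp2 : Integrable (Function.uncurry fun (t u : ℝ) =>
      h t * ((β u : ℂ) * Complex.exp (-ε * u)) * Complex.exp (-(t * (u - y)) * Complex.I)) (volume.prod volume) := by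
    refine hp.mul_bdd (c := 1) ?_ (Eventually.of_forall fun p => ?_)
    · apply Continuous.aestronglyMeasurable; fun_prop
    · have := Complex.norm_exp_ofReal_mul_I (-(p.1 * (p.2 - y)))
      push_cast at this
      rw [this]
  have sw := integral_integral_swap hp2
  calc _ = ∫ t : ℝ, ∫ u : ℝ, h t * ((β u : ℂ) * Complex.exp (-ε * u)) * Complex.exp (-(t * (u - y)) * Complex.I) := by
        congr 1; ext t
        rw [← mul_assoc, ← integral_const_mul]
        congr 1; ext u
        have : Complex.exp (-(ε + t * Complex.I) * u) * Complex.exp (t * y * Complex.I) = Complex.exp (-ε * u) * Complex.exp (-(t * (u - y)) * Complex.I) := by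
          rw [← Complex.exp_add, ← Complex.exp_add]; congr 1; ring
        linear_combination (h t * β u) * this
    _ = _ := by
        rw [sw]
        congr 1; ext u
        rw [← integral_const_mul]
        congr 1; ext t
        ring

lemma fourierTauber (β : ℝ → ℝ) (hm : Measurable β) (M : ℝ) (hM : ∀ u, |β u| ≤ M)
    (h0 : ∀ u ≤ 0, β u = 0) (G : ℂ → ℂ) (hG : ContinuousOn G {s | 1 ≤ s.re})
    (hGβ : ∀ s : ℂ, 1 < s.re → G s = ∫ u : ℝ, β u * Complex.exp (-(s - 1) * u))
    (h : ℝ → ℂ) (hc : Continuous h) (hs : HasCompactSupport h) (K : ℝ → ℂ)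
    (hK : ∀ w : ℝ, K w = ∫ t : ℝ, Complex.exp (-(t * w) * Complex.I) * h t) (hKi : Integrable K) :
    Tendsto (fun y : ℝ => ∫ u : ℝ, β u * K (u - y)) atTop (𝓝 0) := by
  have key : ∀ y : ℝ, ∫ u : ℝ, β u * K (u - y) =
      ∫ t : ℝ, Complex.exp (t * y * Complex.I) * (h t * G (1 + t * Complex.I)) := by
    intro y
    have e1 : ∀ ε : ℝ, 0 < ε → ∫ t : ℝ, Complex.exp (t * y * Complex.I) * (h t * G (1 + ε + t * Complex.I)) =
        ∫ u : ℝ, β u * Complex.exp (-ε * u) * K (u - y) := by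
      intro ε hε
      have := fubini β hm M hM h0 h hc hs ε hε y
      refine Eq.trans ?_ (this.trans ?_)
      · congr 1; ext t
        rw [hGβ _ (by simp [hε])]
        congr 4; ext u
        congr 3; ring
      · congr 1; ext u
        rw [hK]; push_cast; rfl
    have l1 : Tendsto (fun ε : ℝ => ∫ t : ℝ, Complex.exp (t * y * Complex.I) * (h t * G (1 + ε + t * Complex.I)))
        (𝓝[>] 0) (𝓝 (∫ t : ℝ, Complex.exp (t * y * Complex.I) * (h t * G (1 + t * Complex.I)))) := by
      have : ContinuousOn (fun ε : ℝ => ∫ t : ℝ, Complex.exp (t * y * Complex.I) * (h t * G (1 + ε + t * Complex.I))) (Set.Ici 0) := by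
        refine continuousOn_integral_of_compact_support (k := tsupport h) hs ?_ ?_
        · simp only [Function.uncurry_def]
          refine ContinuousOn.mul (by fun_prop) (ContinuousOn.mul (by fun_prop) ?_)
          refine hG.comp (by fun_prop) ?_
          rintro ⟨a, b⟩ ⟨ha, -⟩
          simpa using ha
        · intro p x _ hx
          rw [image_eq_zero_of_notMem_tsupport hx]; simp
      have := (this 0 (by simp)).mono_left (nhdsWithin_mono _ Set.Ioi_subset_Ici_self)
      simpa using this
    have l2 : Tendsto (fun ε : ℝ => ∫ u : ℝ, β u * Complex.exp (-ε * u) * K (u - y))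
        (𝓝[>] 0) (𝓝 (∫ u : ℝ, β u * K (u - y))) := by
      refine tendsto_integral_filter_of_dominated_convergence (fun u => M * ‖K (u - y)‖) ?_ ?_ ?_ ?_
      · refine Eventually.of_forall fun ε => ?_
        refine AEStronglyMeasurable.mul (by fun_prop) (hKi.comp_sub_right y).aestronglyMeasurable
      · filter_upwards [self_mem_nhdsWithin] with ε hε
        refine Eventually.of_forall fun u => ?_
        rw [norm_mul]
        refine mul_le_mul_of_nonneg_right ?_ (norm_nonneg _)
        rcases le_or_gt u 0 with hu | hu
        · rw [h0 u hu]; simp; exact (abs_nonneg _).trans (hM 0)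
        · rw [norm_mul, Complex.norm_exp]
          have : Real.exp (-(ε : ℂ) * u).re ≤ 1 := by
            rw [Real.exp_le_one_iff]
            simp
            exact mul_nonneg (le_of_lt hε) hu.le
          calc _ ≤ M * 1 := by
                gcongr
                · exact (abs_nonneg _).trans (hM 0)
                · simpa using hM u
            _ = M := mul_one M
      · exact (hKi.comp_sub_right y).norm.const_mul M
      · refine Eventually.of_forall fun u => ?_
        have : Continuous fun ε : ℝ => β u * Complex.exp (-ε * u) * K (u - y) := by fun_prop
        have := this.tendsto 0
        simp only [Complex.ofReal_zero, neg_zero, zero_mul, Complex.exp_zero, mul_one] at this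
        exact this.mono_left nhdsWithin_le_nhds
    refine tendsto_nhds_unique l2 (l1.congr' ?_)
    filter_upwards [self_mem_nhdsWithin] with ε hε using e1 ε hε
  simp_rw [key]
  exact rl _


noncomputable def kr (x : ℝ) : ℝ := ∫ t in (0:ℝ)..1, 2 * (1 - t) * Real.cos (t * x)

noncomputable def tri (t : ℝ) : ℝ := max 0 (1 - |t|)

lemma tri_cont : Continuous tri := by unfold tri; fun_prop

lemma tri_zero {t : ℝ} (h : 1 ≤ |t|) : tri t = 0 := by
  unfold tri; exact max_eq_left (by linarith)

lemma kr_cont : Continuous kr := by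
  unfold kr
  exact intervalIntegral.continuous_parametric_intervalIntegral_of_continuous' (by fun_prop) _ _

lemma kr_eq {x : ℝ} (hx : x ≠ 0) : kr x = 2 * (1 - Real.cos x) / x ^ 2 := by
  have := intervalIntegral.integral_eq_sub_of_hasDerivAt (a := 0) (b := 1)
    (f := fun t => 2 * ((1 - t) * Real.sin (t * x) / x - Real.cos (t * x) / x ^ 2))
    (f' := fun t => 2 * (1 - t) * Real.cos (t * x)) ?_ ?_
  · rw [kr, this]; simp; field_simp; ring
  · intro t _
    have a : HasDerivAt (fun t : ℝ => t * x) x t := hasDerivAt_mul_const x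
    have b := ((((hasDerivAt_id t).const_sub 1).mul a.sin).div_const x).sub (a.cos.div_const (x^2))
    have c := b.const_mul 2
    refine c.congr_deriv ?_
    simp; field_simp; ring
  · apply Continuous.intervalIntegrable; fun_prop

lemma kr_nonneg (x : ℝ) : 0 ≤ kr x := by
  rcases eq_or_ne x 0 with rfl | hx
  · unfold kr
    refine intervalIntegral.integral_nonneg (by norm_num) fun t ht => ?_
    simp; exact ht.2
  · rw [kr_eq hx]
    have := Real.cos_le_one x
    have : 0 ≤ 1 - Real.cos x := by linarith
    positivity

lemma kr_zero : kr 0 = 1 := by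
  simp only [kr, mul_zero, Real.cos_zero, mul_one]
  rw [intervalIntegral.integral_const_mul, intervalIntegral.integral_sub (by simp) (by simp)]
  simp; norm_num

lemma kr_le_two (x : ℝ) : kr x ≤ 2 := by
  have := intervalIntegral.norm_integral_le_of_norm_le_const (a := 0) (b := 1) (C := 2)
    (f := fun t => 2 * (1 - t) * Real.cos (t * x)) ?_
  · have h2 := le_abs_self (kr x)
    rw [Real.norm_eq_abs] at this
    unfold kr at h2 ⊢
    norm_num at this
    linarith
  · intro t ht
    rw [Set.uIoc_of_le (by norm_num)] at ht
    rw [norm_mul, Real.norm_eq_abs, Real.norm_eq_abs, abs_of_nonneg (by linarith [ht.2])]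
    have := Real.abs_cos_le_one (t * x)
    nlinarith [ht.1, ht.2, abs_nonneg (Real.cos (t*x))]

lemma kr_int : Integrable kr := by
  refine (integrable_inv_one_add_sq.const_mul 8).mono' kr_cont.aestronglyMeasurable
    (Eventually.of_forall fun x => ?_)
  rw [Real.norm_eq_abs, abs_of_nonneg (kr_nonneg x), ← div_eq_mul_inv, le_div_iff₀ (by positivity)]
  by_cases h : x ^ 2 ≤ 1
  · nlinarith [kr_le_two x, kr_nonneg x]
  · have hx : x ≠ 0 := by rintro rfl; simp at h
    rw [kr_eq hx, div_mul_eq_mul_div, div_le_iff₀ (by positivity)]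
    nlinarith [Real.neg_one_le_cos x, Real.cos_le_one x]

lemma kr_pos : 0 < ∫ x, kr x :=
  integral_pos_of_integrable_nonneg_nonzero kr_cont kr_int kr_nonneg (x := 0) (by rw [kr_zero]; norm_num)

lemma fourier_tri (x : ℝ) : ∫ t : ℝ, Complex.exp (-(t * x) * Complex.I) * tri t = kr x := by
  have hcont : Continuous fun t : ℝ => Complex.exp (-(t * x) * Complex.I) * (tri t : ℂ) := by
    have := tri_cont
    fun_prop
  rw [← intervalIntegral.integral_eq_integral_of_support_subset (a := -1) (b := 1)]
  · rw [← intervalIntegral.integral_add_adjacent_intervals (b := 0)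
      (hcont.intervalIntegrable _ _) (hcont.intervalIntegrable _ _)]
    have : ∫ t in (-1:ℝ)..0, Complex.exp (-(t * x) * Complex.I) * (tri t : ℂ) =
       ∫ t in (0:ℝ)..1, Complex.exp (-((-t : ℝ) * x) * Complex.I) * (tri (-t) : ℂ) := by
      rw [intervalIntegral.integral_comp_neg (fun t : ℝ => Complex.exp (-(t * x) * Complex.I) * (tri t : ℂ))]
      simp
    rw [this, ← intervalIntegral.integral_add, kr, ← intervalIntegral.integral_ofReal]
    · refine intervalIntegral.integral_congr fun t ht => ?_
      rw [Set.uIcc_of_le (by norm_num)] at ht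
      have h1 : tri t = 1 - t := by
        unfold tri; rw [abs_of_nonneg ht.1]; exact max_eq_right (by linarith [ht.2])
      have h2 : tri (-t) = 1 - t := by rw [← h1]; simp [tri]
      simp only [h1, h2]
      push_cast
      rw [Complex.cos]
      ring_nf
    · apply Continuous.intervalIntegrable
      have := tri_cont
      fun_prop
    · exact hcont.intervalIntegrable _ _
  · intro t ht
    by_contra hh
    apply ht
    simp only
    rw [tri_zero]; · simp
    simp only [Set.mem_Ioc, not_and_or, not_lt, not_le] at hh
    rcases hh with h | h
    · rw [abs_of_nonpos (by linarith)]; linarith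
    · rw [abs_of_nonneg (by linarith)]; linarith

lemma fourier_tri_scale (l : ℝ) (hl : 0 < l) (x : ℝ) :
    ((l * kr (l * x) : ℝ) : ℂ) = ∫ t : ℝ, Complex.exp (-(t * x) * Complex.I) * tri (t / l) := by
  have := Measure.integral_comp_div (fun t : ℝ => Complex.exp (-(t * (l * x : ℝ)) * Complex.I) * (tri t : ℂ)) l
  rw [fourier_tri, abs_of_pos hl] at this
  rw [Complex.ofReal_mul]
  simp only [Complex.real_smul] at this
  rw [← this]
  congr 1; ext t
  congr 3
  push_cast
  have : (l : ℂ) ≠ 0 := by exact_mod_cast hl.ne'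
  field_simp

/-- no long runs where `β ≥ η` -/
lemma tauberFinish (β : ℝ → ℝ) (hm : Measurable β) (M : ℝ) (hM : ∀ u, |β u| ≤ M)
    (H : ∀ l : ℝ, 0 < l → Tendsto (fun y : ℝ => ∫ u : ℝ, β u * (l * kr (l * (u - y)))) atTop (𝓝 0))
    (η δ : ℝ) (hη : 0 < η) (hδ : 0 < δ) :
    ∀ᶠ y in atTop, ∃ u ∈ Set.Icc (y - δ) (y + δ), β u < η := by
  have hM0 : 0 ≤ M := (abs_nonneg _).trans (hM 0)
  set κ := ∫ x, kr x with hκ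
  have hκ0 : 0 < κ := kr_pos
  have ht : Tendsto (fun R : ℝ => (η + M) * (∫ x in (-R)..R, kr x) - M * κ) atTop (𝓝 ((η + M) * κ - M * κ)) :=
    ((intervalIntegral_tendsto_integral kr_int tendsto_neg_atTop_atBot tendsto_id).const_mul _).sub_const _
  obtain ⟨R, hR, hR0⟩ := ((ht.eventually (lt_mem_nhds (show (0:ℝ) < _ by nlinarith))).and (eventually_gt_atTop 0)).exists
  set c := (η + M) * (∫ x in (-R)..R, kr x) - M * κ
  set l := R / δ with hl
  have hl0 : 0 < l := by positivity
  filter_upwards [(H l hl0).eventually (gt_mem_nhds hR)] with y hy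
  by_contra! hcon
  have e : ∫ u : ℝ, β u * (l * kr (l * (u - y))) = ∫ v : ℝ, β (v / l + y) * kr v := by
    have e1 := integral_sub_right_eq_self (μ := volume) (fun u : ℝ => β (u + y) * (l * kr (l * u))) y
    have e2 := Measure.integral_comp_mul_left (fun v : ℝ => β (v / l + y) * kr v) l
    simp only [sub_add_cancel] at e1
    rw [e1]
    rw [abs_of_pos (by positivity), smul_eq_mul, inv_mul_eq_div, eq_div_iff hl0.ne'] at e2
    rw [← e2, mul_comm, ← integral_const_mul]
    congr 1; ext u
    rw [mul_div_cancel_left₀ _ hl0.ne']; ring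
  rw [e] at hy
  have hi : Integrable (fun v => (Set.Ioc (-R) R).indicator kr v) := kr_int.indicator measurableSet_Ioc
  have : c ≤ ∫ v : ℝ, β (v / l + y) * kr v := by
    have : c = ∫ v, ((η + M) * (Set.Ioc (-R) R).indicator kr v - M * kr v) := by
      rw [integral_sub (hi.const_mul _) (kr_int.const_mul _), integral_const_mul, integral_const_mul,
        integral_indicator measurableSet_Ioc, ← intervalIntegral.integral_of_le (by linarith)]
    rw [this]
    refine integral_mono ((hi.const_mul _).sub (kr_int.const_mul _)) ?_ fun v => ?_
    · refine kr_int.bdd_mul (c := M) ?_ (Eventually.of_forall fun v => hM _)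
      apply Measurable.aestronglyMeasurable; fun_prop
    · have k0 := kr_nonneg v
      simp only
      by_cases hv : v ∈ Set.Ioc (-R) R
      · rw [Set.indicator_of_mem hv]
        have : η ≤ β (v / l + y) := by
          apply hcon
          have h1 : -δ ≤ v / l := by
            rw [le_div_iff₀ hl0, hl, neg_mul, mul_div_cancel₀ _ hδ.ne']; exact hv.1.le
          have h2 : v / l ≤ δ := by
            rw [div_le_iff₀ hl0, hl, mul_div_cancel₀ _ hδ.ne']; exact hv.2
          constructor <;> linarith
        nlinarith
      · rw [Set.indicator_of_notMem hv]
        have := (abs_le.1 (hM (v / l + y))).1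
        nlinarith
  linarith

end PNT

namespace PNT
open MeasureTheory Topology Chebyshev

noncomputable def beta (u : ℝ) : ℝ := if 0 < u then psi (Real.exp u) * Real.exp (-u) - 1 else 0

lemma beta_meas : Measurable beta := by
  unfold beta
  refine Measurable.ite measurableSet_Ioi ?_ measurable_const
  have := psi_mono.measurable
  fun_prop

lemma beta_bdd (u : ℝ) : |beta u| ≤ Real.log 4 + 5 := by
  have h4 : 0 ≤ Real.log 4 := Real.log_nonneg (by norm_num)
  unfold beta
  split_ifs with h
  · have h1 := psi_le_const_mul_self (Real.exp_pos u).le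
    have h2 := psi_nonneg (Real.exp u)
    have h3 : psi (Real.exp u) * Real.exp (-u) ≤ Real.log 4 + 4 := by
      rw [Real.exp_neg, ← div_eq_mul_inv, div_le_iff₀ (Real.exp_pos u)]; exact h1
    have h5 : 0 ≤ psi (Real.exp u) * Real.exp (-u) := by positivity
    rw [abs_le]; constructor <;> linarith
  · simp; linarith

noncomputable def Gz (s : ℂ) : ℂ :=
  (ArithmeticFunction.vonMangoldt.LFunctionResidueClassAux (1 : ZMod 1) s - 1) / s

lemma Gz_cont : ContinuousOn Gz {s | 1 ≤ s.re} := by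
  refine ((ArithmeticFunction.vonMangoldt.continuousOn_LFunctionResidueClassAux (1 : ZMod 1)).sub
    continuousOn_const).div continuousOn_id ?_
  rintro s hs rfl
  simp at hs
  linarith

lemma resid (n : ℕ) : ArithmeticFunction.vonMangoldt.residueClass (1 : ZMod 1) n = ArithmeticFunction.vonMangoldt n := by
  unfold ArithmeticFunction.vonMangoldt.residueClass
  rw [Set.indicator_of_mem]
  exact Subsingleton.elim _ _

lemma expint {s : ℂ} (hs : 1 < s.re) : IntegrableOn (fun u : ℝ => Complex.exp (-(s - 1) * u)) (Set.Ioi 0) :=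
  integrableOn_exp_mul_complex_Ioi (by simpa using hs) 0

lemma Lint {s : ℂ} (hs : 1 < s.re) : LSeries (fun n => (ArithmeticFunction.vonMangoldt n : ℂ)) s =
    s * ∫ u in Set.Ioi (0:ℝ), ((psi (Real.exp u) * Real.exp (-u) : ℝ) : ℂ) * Complex.exp (-(s - 1) * u) := by
  have hsum : ∀ n : ℕ, ∑ k ∈ Icc 1 n, ArithmeticFunction.vonMangoldt k = psi n := by
    intro n; simp [psi]; rfl
  rw [LSeries_eq_mul_integral_of_nonneg (fun n => ArithmeticFunction.vonMangoldt n) zero_le_one hs ?_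
    (fun n => ArithmeticFunction.vonMangoldt_nonneg)]
  · congr 1
    have him : Real.exp '' (Set.Ioi 0) = Set.Ioi 1 := by
      ext x; constructor
      · rintro ⟨u, hu, rfl⟩; exact Real.one_lt_exp_iff.2 hu
      · intro hx; exact ⟨Real.log x, Real.log_pos hx, Real.exp_log (zero_lt_one.trans hx)⟩
    rw [← him, integral_image_eq_integral_abs_deriv_smul measurableSet_Ioi
      (fun x _ => (Real.hasDerivAt_exp x).hasDerivWithinAt) Real.exp_injective.injOn]
    refine setIntegral_congr_fun measurableSet_Ioi fun u hu => ?_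
    rw [← Complex.ofReal_sum, hsum, ← psi_eq_psi_coe_floor, abs_of_pos (Real.exp_pos u), Complex.real_smul]
    have : ((Real.exp u : ℝ) : ℂ) ^ (-(s+1)) = Complex.exp (-(s+1) * u) := by
      rw [Complex.cpow_def_of_ne_zero (by exact_mod_cast (Real.exp_pos u).ne'), ← Complex.ofReal_log (Real.exp_pos u).le,
        Real.log_exp, mul_comm]
    rw [this]
    push_cast
    have e : Complex.exp u * Complex.exp (-(s+1) * u) = Complex.exp (-u) * Complex.exp (-(s-1) * u) := by
      rw [← Complex.exp_add, ← Complex.exp_add]; congr 1; ring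
    linear_combination (psi (Real.exp u) : ℂ) * e
  · simp_rw [hsum]
    refine Asymptotics.IsBigO.of_bound (Real.log 4 + 4) (Eventually.of_forall fun n => ?_)
    rw [Real.rpow_one, Real.norm_of_nonneg (psi_nonneg _), Real.norm_of_nonneg (Nat.cast_nonneg n)]
    exact psi_le_const_mul_self (Nat.cast_nonneg n)

lemma Gz_eq (s : ℂ) (hs : 1 < s.re) : Gz s = ∫ u : ℝ, beta u * Complex.exp (-(s - 1) * u) := by
  have hb : ∀ u : ℝ, (beta u : ℂ) * Complex.exp (-(s - 1) * u) = (Set.Ioi (0:ℝ)).indicator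
      (fun u : ℝ => ((psi (Real.exp u) * Real.exp (-u) : ℝ) : ℂ) * Complex.exp (-(s - 1) * u)
        - Complex.exp (-(s - 1) * u)) u := by
    intro u
    by_cases hu : 0 < u
    · rw [Set.indicator_of_mem (Set.mem_Ioi.2 hu), beta, if_pos hu]; push_cast; ring
    · rw [Set.indicator_of_notMem (fun h => hu (Set.mem_Ioi.1 h)), beta, if_neg hu]; simp
  have hs1 : s - 1 ≠ 0 := by
    intro h; rw [sub_eq_zero] at h; rw [h] at hs; simp at hs
  have hs0 : s ≠ 0 := by rintro rfl; simp at hs; linarith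
  simp_rw [hb]
  rw [integral_indicator measurableSet_Ioi, integral_sub _ (expint hs)]
  · have h2 := ArithmeticFunction.vonMangoldt.eqOn_LFunctionResidueClassAux (q := 1) (a := 1) isUnit_one hs
    have h3 := integral_exp_mul_complex_Ioi (a := -(s - 1)) (by simpa using hs) 0
    have h4 : -Complex.exp (-(s - 1) * ((0:ℝ):ℂ)) / -(s - 1) = 1 / (s - 1) := by
      rw [neg_div_neg_eq]; simp
    rw [h3, h4, Gz, h2]
    simp only [resid]
    rw [Lint hs]
    generalize ∫ u in Set.Ioi (0:ℝ), ((psi (Real.exp u) * Real.exp (-u) : ℝ) : ℂ) * Complex.exp (-(s - 1) * u) = J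
    simp only [Nat.totient_one, Nat.cast_one, inv_one]
    field_simp
    ring
  · refine (expint hs).bdd_mul (c := Real.log 4 + 6) ?_ ?_
    · have := psi_mono.measurable
      apply Measurable.aestronglyMeasurable; fun_prop
    · refine (ae_restrict_iff' measurableSet_Ioi).2 (Eventually.of_forall fun u hu => ?_)
      have := beta_bdd u
      rw [beta, if_pos (Set.mem_Ioi.1 hu)] at this
      rw [Complex.norm_real, Real.norm_eq_abs]
      have := abs_le.1 this
      rw [abs_le]; constructor <;> linarith

lemma beta_conv (l : ℝ) (hl : 0 < l) :
    Tendsto (fun y : ℝ => ∫ u : ℝ, beta u * (l * kr (l * (u - y)))) atTop (𝓝 0) := by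
  have hKi : Integrable (fun x : ℝ => ((l * kr (l * x) : ℝ) : ℂ)) :=
    ((kr_int.comp_mul_left' hl.ne').const_mul l).ofReal
  have hsup : HasCompactSupport fun t : ℝ => (tri (t / l) : ℂ) := by
    refine HasCompactSupport.intro (K := Set.Icc (-l) l) isCompact_Icc fun t ht => ?_
    rw [tri_zero]; · simp
    rw [abs_div, abs_of_pos hl, le_div_iff₀ hl, one_mul]
    by_contra! h
    exact ht ⟨(abs_lt.1 h).1.le, (abs_lt.1 h).2.le⟩
  have := fourierTauber beta beta_meas _ beta_bdd (fun u hu => if_neg (not_lt.2 hu)) Gz Gz_cont Gz_eq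
    (fun t => (tri (t / l) : ℂ)) (by have := tri_cont; fun_prop) hsup _ (fourier_tri_scale l hl) hKi
  have h2 := (Complex.continuous_re.tendsto 0).comp this
  simp only [Complex.zero_re] at h2
  refine h2.congr fun y => ?_
  simp only [Function.comp, ← Complex.ofReal_mul]
  rw [integral_complex_ofReal, Complex.ofReal_re]

lemma psi_ratio {u v : ℝ} (h : u ≤ v) :
    psi (Real.exp u) * Real.exp (-u) ≤ (psi (Real.exp v) * Real.exp (-v)) * Real.exp (v - u) := by
  rw [mul_assoc, ← Real.exp_add, show -v + (v - u) = -u by ring]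
  exact mul_le_mul_of_nonneg_right (psi_mono (Real.exp_le_exp.2 h)) (Real.exp_pos _).le

lemma beta_tendsto : Tendsto beta atTop (𝓝 0) := by
  rw [Metric.tendsto_atTop']
  suffices h : ∀ η : ℝ, 0 < η → η < 1 → ∀ᶠ z in atTop, |beta z| < η by
    intro ε hε
    have := h (min ε (1/2)) (by positivity) (by linarith [min_le_right ε (1/2)])
    obtain ⟨N, hN⟩ := eventually_atTop.1 this
    refine ⟨N, fun n hn => ?_⟩
    rw [Real.dist_eq, sub_zero]
    exact (hN n hn.le).trans_le (min_le_left _ _)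
  intro η hη hη1
  set δ := Real.log ((1 + η) / (1 + η/2)) / 2 with hδ
  have hδ0 : 0 < δ := by
    apply div_pos _ two_pos
    apply Real.log_pos
    rw [one_lt_div (by positivity)]; linarith
  have hexp : Real.exp (2 * δ) = (1 + η) / (1 + η/2) := by
    rw [hδ, mul_div_cancel₀ _ two_ne_zero, Real.exp_log (by positivity)]
  have hexp' : Real.exp (2 * δ) * (1 + η/2) = 1 + η := by rw [hexp]; field_simp
  have hup := tauberFinish beta beta_meas _ beta_bdd beta_conv (η/2) δ (by positivity) hδ0
  have hlo := tauberFinish (fun u => - beta u) beta_meas.neg _ (by simpa using beta_bdd)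
    (by intro l hl; simpa [neg_mul, integral_neg] using (beta_conv l hl).neg) (η/2) δ (by positivity) hδ0
  have t1 : Tendsto (fun z : ℝ => z + δ) atTop atTop := tendsto_atTop_add_const_right _ _ tendsto_id
  have t2 : Tendsto (fun z : ℝ => z - δ) atTop atTop := by
    simpa [sub_eq_add_neg] using tendsto_atTop_add_const_right atTop (-δ) (tendsto_id (α := ℝ))
  filter_upwards [t1.eventually hup, t2.eventually hlo, eventually_gt_atTop (2 * δ)] with z h1 h2 hz
  have bz : beta z = psi (Real.exp z) * Real.exp (-z) - 1 := if_pos (by linarith)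
  obtain ⟨u, ⟨hu1, hu2⟩, hu⟩ := h1
  obtain ⟨w, ⟨hw1, hw2⟩, hw⟩ := h2
  have bu : beta u = psi (Real.exp u) * Real.exp (-u) - 1 := if_pos (by linarith)
  have nn : ∀ x : ℝ, 0 ≤ psi (Real.exp x) * Real.exp (-x) := fun x =>
    mul_nonneg (psi_nonneg _) (Real.exp_pos _).le
  rw [abs_lt]
  constructor
  · rcases eq_or_lt_of_le (show 0 ≤ w by linarith) with h | h
    · exfalso; linarith
    have bw : beta w = psi (Real.exp w) * Real.exp (-w) - 1 := if_pos h
    have r := psi_ratio (show w ≤ z by linarith)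
    have r2 : Real.exp (z - w) ≤ Real.exp (2 * δ) := Real.exp_le_exp.2 (by linarith)
    have r3 := mul_le_mul_of_nonneg_left r2 (nn z)
    have r4 : 1 - η / 2 < (beta z + 1) * Real.exp (2 * δ) := by
      rw [bz]; simp only [sub_add_cancel]; linarith
    have r5 : (1 - η/2) * (1 + η/2) < (beta z + 1) * (1 + η) := by
      rw [← hexp', ← mul_assoc]
      exact mul_lt_mul_of_pos_right r4 (by positivity)
    nlinarith
  · have r := psi_ratio (show z ≤ u by linarith)
    have r2 : Real.exp (u - z) ≤ Real.exp (2 * δ) := Real.exp_le_exp.2 (by linarith)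
    have r3 := mul_le_mul_of_nonneg_left r2 (nn u)
    have r4 := mul_lt_mul_of_pos_right (show psi (Real.exp u) * Real.exp (-u) < 1 + η/2 by linarith) (Real.exp_pos (2 * δ))
    linarith

theorem psi_pnt : Tendsto (fun x : ℝ => psi x / x) atTop (𝓝 1) := by
  have := (beta_tendsto.comp Real.tendsto_log_atTop).add_const 1
  rw [zero_add] at this
  refine this.congr' ?_
  filter_upwards [eventually_gt_atTop 1] with x hx
  simp only [Function.comp, beta]
  rw [if_pos (Real.log_pos hx), Real.exp_neg, Real.exp_log (by linarith)]
  simp [div_eq_mul_inv]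

theorem theta_pnt : Tendsto (fun x : ℝ => theta x / x) atTop (𝓝 1) := by
  have h : Tendsto (fun x : ℝ => (psi x - theta x) / x) atTop (𝓝 0) := by
    obtain ⟨C, hC⟩ := psi_sub_theta_le_mul_sqrt
    have h1 : Tendsto (fun x : ℝ => C * (Real.sqrt x)⁻¹) atTop (𝓝 0) := by
      simpa using (tendsto_inv_atTop_zero.comp Real.tendsto_sqrt_atTop).const_mul C
    refine squeeze_zero' ?_ ?_ h1
    · filter_upwards [eventually_gt_atTop 0] with x hx
      exact div_nonneg (sub_nonneg.2 (theta_le_psi x)) hx.le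
    · filter_upwards [eventually_gt_atTop 0] with x hx
      rw [div_le_iff₀ hx]
      refine (hC x).trans (le_of_eq ?_)
      have := Real.sq_sqrt hx.le
      have h0 : Real.sqrt x ≠ 0 := (Real.sqrt_pos.2 hx).ne'
      field_simp
      rw [this]
  have := psi_pnt.sub h
  simp only [sub_zero] at this
  refine this.congr fun x => ?_
  ring

end PNT

namespace PNT
open Topology

lemma byParts (w a : ℕ → ℝ) (n : ℕ) : ∑ j ∈ range (n + 1), w j * a j =
    w n * (∑ j ∈ range (n + 1), a j) - ∑ i ∈ range n, (w (i + 1) - w i) * ∑ j ∈ range (i + 1), a j := by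
  simpa using sum_range_by_parts w a (n + 1)

lemma linBound (S W : ℕ → ℝ) (hW : ∀ n, 0 ≤ W n) (hW' : ∀ n, 0 < W (n + 1))
    (h : Tendsto (fun n => S n / W n) atTop (𝓝 0)) (ε : ℝ) (hε : 0 < ε) :
    ∃ C, 0 ≤ C ∧ ∀ n, |S n| ≤ ε * W n + C := by
  have := (h.eventually (Metric.ball_mem_nhds 0 hε))
  obtain ⟨N, hN⟩ := eventually_atTop.1 this
  refine ⟨∑ j ∈ range (N + 1), |S j|, sum_nonneg fun _ _ => abs_nonneg _, fun n => ?_⟩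
  have h0 : 0 ≤ ε * W n := mul_nonneg hε.le (hW n)
  by_cases hn : n < N + 1
  · have := single_le_sum (f := fun j => |S j|) (fun _ _ => abs_nonneg _) (mem_range.2 hn)
    linarith
  · have h1 := hN n (by omega)
    rw [Real.dist_eq, sub_zero, abs_div, abs_of_nonneg (hW n)] at h1
    obtain ⟨m, rfl⟩ : ∃ m, n = m + 1 := ⟨n - 1, by omega⟩
    rw [div_lt_iff₀ (hW' m)] at h1
    have : 0 ≤ ∑ j ∈ range (N + 1), |S j| := sum_nonneg fun _ _ => abs_nonneg _
    linarith

lemma zero_of_bound (f : ℕ → ℝ) (B : ℝ) (hB : 0 < B)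
    (h : ∀ ε : ℝ, 0 < ε → ∃ C, ∀ᶠ n : ℕ in atTop, |f (n + 1)| ≤ B * ε + C / ((n : ℝ) + 1)) :
    Tendsto f atTop (𝓝 0) := by
  rw [← tendsto_add_atTop_iff_nat 1, Metric.tendsto_nhds]
  intro e he
  obtain ⟨C, hC⟩ := h (e / (2 * B)) (by positivity)
  have ht : Tendsto (fun n : ℕ => C / ((n : ℝ) + 1)) atTop (𝓝 0) := by
    have := (tendsto_one_div_add_atTop_nhds_zero_nat (𝕜 := ℝ)).const_mul C
    simpa [div_eq_mul_inv] using this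
  filter_upwards [hC, ht.eventually (gt_mem_nhds (half_pos he))] with n h1 h2
  rw [Real.dist_eq, sub_zero]
  have : B * (e / (2 * B)) = e / 2 := by field_simp
  linarith

lemma toeplitz1 (w a : ℕ → ℝ) (hw : Monotone w) (hw0 : ∀ n, 0 < w n) (B : ℝ) (hB : 0 < B)
    (hBW : ∀ᶠ n : ℕ in atTop, ((n : ℝ) + 1) * w n ≤ B * ∑ j ∈ range (n + 1), w j)
    (h : Tendsto (fun n : ℕ => (∑ j ∈ range n, a j) / (n : ℝ)) atTop (𝓝 0)) :
    Tendsto (fun n : ℕ => (∑ j ∈ range n, w j * a j) / ∑ j ∈ range n, w j) atTop (𝓝 0) := by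
  refine zero_of_bound _ (2 * B) (by positivity) fun ε hε => ?_
  obtain ⟨C, hC0, hC⟩ := linBound _ (fun n => (n : ℝ)) (fun n => Nat.cast_nonneg n)
    (fun n => by positivity) h ε hε
  refine ⟨2 * B * C, ?_⟩
  filter_upwards [hBW] with n hn
  have hWpos : 0 < ∑ j ∈ range (n + 1), w j := sum_pos (fun j _ => hw0 j) (by simp)
  have hS : ∀ i, i ≤ n → |∑ j ∈ range (i + 1), a j| ≤ ε * ((n : ℝ) + 1) + C := by
    intro i hi
    refine (hC (i + 1)).trans ?_
    have : ((i : ℝ)) ≤ n := by exact_mod_cast hi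
    push_cast
    gcongr
  set D := ε * ((n : ℝ) + 1) + C
  have hD : 0 ≤ D := by positivity
  have key : |∑ j ∈ range (n + 1), w j * a j| ≤ 2 * (w n * D) := by
    rw [byParts]
    refine (abs_sub _ _).trans ?_
    have e1 : |w n * ∑ j ∈ range (n + 1), a j| ≤ w n * D := by
      rw [abs_mul, abs_of_pos (hw0 n)]
      exact mul_le_mul_of_nonneg_left (hS n le_rfl) (hw0 n).le
    have e2 : |∑ i ∈ range n, (w (i + 1) - w i) * ∑ j ∈ range (i + 1), a j| ≤ w n * D := by
      calc _ ≤ ∑ i ∈ range n, |(w (i + 1) - w i) * ∑ j ∈ range (i + 1), a j| := abs_sum_le_sum_abs _ _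
        _ ≤ ∑ i ∈ range n, (w (i + 1) - w i) * D := by
            refine sum_le_sum fun i hi => ?_
            have h1 : 0 ≤ w (i + 1) - w i := sub_nonneg.2 (hw (Nat.le_succ i))
            rw [abs_mul, abs_of_nonneg h1]
            exact mul_le_mul_of_nonneg_left (hS i (mem_range.1 hi).le) h1
        _ = (w n - w 0) * D := by rw [← sum_mul, sum_range_sub]
        _ ≤ w n * D := by
            apply mul_le_mul_of_nonneg_right _ hD
            linarith [hw0 0]
    linarith
  rw [abs_div, abs_of_pos hWpos, div_le_iff₀ hWpos]
  refine key.trans ?_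
  have hn1 : (0:ℝ) < (n : ℝ) + 1 := by positivity
  have : 2 * (w n * D) = 2 * (((n : ℝ) + 1) * w n) * (ε + C / ((n : ℝ) + 1)) := by
    simp only [D]; field_simp
  rw [this]
  have h3 : 0 ≤ ε + C / ((n : ℝ) + 1) := by positivity
  have h4 := mul_le_mul_of_nonneg_right hn h3
  have : (2 * B * ε + 2 * B * C / ((n : ℝ) + 1)) * ∑ j ∈ range (n + 1), w j
    = 2 * (B * (∑ j ∈ range (n + 1), w j) * (ε + C / ((n : ℝ) + 1))) := by ring
  rw [this]
  linarith

lemma toeplitz2 (w a : ℕ → ℝ) (hw : Monotone w) (hw0 : ∀ n, 0 < w n)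
    (h : Tendsto (fun n : ℕ => (∑ j ∈ range n, w j * a j) / ∑ j ∈ range n, w j) atTop (𝓝 0)) :
    Tendsto (fun n : ℕ => (∑ j ∈ range n, a j) / (n : ℝ)) atTop (𝓝 0) := by
  refine zero_of_bound _ 1 one_pos fun ε hε => ?_
  obtain ⟨C, hC0, hC⟩ := linBound _ (fun n => ∑ j ∈ range n, w j)
    (fun n => sum_nonneg fun j _ => (hw0 j).le)
    (fun n => sum_pos (fun j _ => hw0 j) (by simp)) h ε hε
  refine ⟨C * (w 0)⁻¹, Eventually.of_forall fun n => ?_⟩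
  have hn1 : (0:ℝ) < (n : ℝ) + 1 := by positivity
  set v : ℕ → ℝ := fun j => (w j)⁻¹ with hv
  have hv0 : ∀ j, 0 < v j := fun j => inv_pos.2 (hw0 j)
  have hva : ∀ i, 0 ≤ v i - v (i + 1) := fun i =>
    sub_nonneg.2 (inv_anti₀ (hw0 i) (hw (Nat.le_succ i)))
  have hvw : ∀ j, v j * w j = 1 := fun j => inv_mul_cancel₀ (hw0 j).ne'
  have ea : ∑ j ∈ range (n + 1), a j = ∑ j ∈ range (n + 1), v j * (w j * a j) := by
    refine sum_congr rfl fun j _ => ?_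
    rw [← mul_assoc, hvw, one_mul]
  have e1 : (n : ℝ) + 1 = v n * (∑ j ∈ range (n + 1), w j) -
      ∑ i ∈ range n, (v (i + 1) - v i) * ∑ j ∈ range (i + 1), w j := by
    rw [← byParts, sum_congr rfl fun j _ => hvw j]; simp
  have e2 : v 0 = v n + ∑ i ∈ range n, (v i - v (i + 1)) := by
    rw [sum_range_sub']; ring
  have key : |∑ j ∈ range (n + 1), a j| ≤ ε * ((n : ℝ) + 1) + C * v 0 := by
    rw [ea, byParts, sub_eq_add_neg, ← sum_neg_distrib]
    calc _ ≤ |v n * ∑ j ∈ range (n + 1), w j * a j| +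
          ∑ i ∈ range n, |-((v (i + 1) - v i) * ∑ j ∈ range (i + 1), w j * a j)| :=
          (abs_add_le _ _).trans (by gcongr; exact abs_sum_le_sum_abs _ _)
      _ ≤ v n * (ε * (∑ j ∈ range (n + 1), w j) + C) +
          ∑ i ∈ range n, (v i - v (i + 1)) * (ε * (∑ j ∈ range (i + 1), w j) + C) := by
          apply add_le_add
          · rw [abs_mul, abs_of_pos (hv0 n)]
            exact mul_le_mul_of_nonneg_left (hC _) (hv0 n).le
          · refine sum_le_sum fun i _ => ?_
            rw [← neg_mul, neg_sub, abs_mul, abs_of_nonneg (hva i)]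
            exact mul_le_mul_of_nonneg_left (hC _) (hva i)
      _ = ε * ((n : ℝ) + 1) + C * v 0 := by
          have e3 : ∑ i ∈ range n, (v i - v (i + 1)) * (ε * (∑ j ∈ range (i + 1), w j) + C) =
              C * (∑ i ∈ range n, (v i - v (i + 1))) -
                ε * ∑ i ∈ range n, (v (i + 1) - v i) * ∑ j ∈ range (i + 1), w j := by
            rw [mul_sum (range n), mul_sum (range n), ← sum_sub_distrib]
            refine sum_congr rfl fun i _ => ?_
            ring
          rw [e3, e1, e2]
          ring
  rw [abs_div, Nat.cast_add, Nat.cast_one, abs_of_pos hn1, div_le_iff₀ hn1]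
  refine key.trans (le_of_eq ?_)
  simp only [hv]
  field_simp

noncomputable def lw (j : ℕ) : ℝ := Real.log (Nat.nth Nat.Prime j)

lemma lw_pos (n : ℕ) : 0 < lw n := Real.log_pos (by exact_mod_cast (Nat.prime_nth_prime n).one_lt)

lemma lw_mono : Monotone lw := fun m n h => by
  refine Real.log_le_log (by exact_mod_cast (Nat.prime_nth_prime m).pos) ?_
  exact_mod_cast Nat.nth_monotone Nat.infinite_setOfPred_prime h

lemma theta_eq (N : ℕ) : ∑ j ∈ range (Nat.primeCounting N), lw j = Chebyshev.theta N := by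
  rw [Chebyshev.theta_eq_sum_Icc, Nat.floor_natCast, ← Nat.range_succ_eq_Icc_zero]
  rw [Nat.primeCounting, Nat.primeCounting']
  generalize N + 1 = m
  induction m with
  | zero => simp
  | succ m ih =>
    rw [Nat.count_succ, range_add_one, filter_insert]
    split_ifs with hp
    · rw [sum_range_succ, ih, sum_insert (by simp), lw, Nat.nth_count hp, add_comm]
    · simpa using ih

lemma pi_nth (n : ℕ) : Nat.primeCounting (Nat.nth Nat.Prime n) = n + 1 := by
  rw [Nat.primeCounting, Nat.primeCounting', Nat.count_succ, if_pos (Nat.prime_nth_prime n)]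
  congr 1
  exact Nat.primeCounting'_nth_eq n

lemma nth_tendsto : Tendsto (fun n => Nat.nth Nat.Prime n) atTop atTop :=
  (Nat.nth_strictMono Nat.infinite_setOfPred_prime).tendsto_atTop

lemma lw_bound : ∀ᶠ n : ℕ in atTop, ((n : ℝ) + 1) * lw n ≤ (2 * (Real.log 4 + 1)) * ∑ j ∈ range (n + 1), lw j := by
  have t : Tendsto (fun n => ((Nat.nth Nat.Prime n : ℕ) : ℝ)) atTop atTop :=
    tendsto_natCast_atTop_atTop.comp nth_tendsto
  have h1 := t.eventually (Chebyshev.eventually_primeCounting_le one_pos)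
  have h2 := t.eventually (theta_pnt.eventually (lt_mem_nhds (show (1/2:ℝ) < 1 by norm_num)))
  filter_upwards [h1, h2] with n h1 h2
  have hp : (0:ℝ) < (Nat.nth Nat.Prime n : ℕ) := by exact_mod_cast (Nat.prime_nth_prime n).pos
  rw [Nat.floor_natCast, pi_nth, le_div_iff₀ (show 0 < Real.log _ from lw_pos n)] at h1
  rw [lt_div_iff₀ hp, ← theta_eq, pi_nth] at h2
  push_cast at h1
  have h4 : 0 ≤ Real.log 4 := Real.log_nonneg (by norm_num)
  have h5 : 0 ≤ Real.log 4 + 1 := by linarith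
  change ((n : ℝ) + 1) * lw n ≤ _ at h1
  nlinarith

lemma shift1 (a : ℕ → ℝ) (c : ℝ) :
    Tendsto (fun n : ℕ => (n : ℝ)⁻¹ * ∑ j ∈ range n, a j) atTop (𝓝 c) ↔
    Tendsto (fun n : ℕ => (∑ j ∈ range n, (a j - c)) / (n : ℝ)) atTop (𝓝 0) := by
  rw [← tendsto_sub_nhds_zero_iff]
  refine tendsto_congr' ?_
  filter_upwards [eventually_gt_atTop 0] with n hn
  have : (n : ℝ) ≠ 0 := by positivity
  rw [sum_sub_distrib]
  simp
  field_simp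

lemma shift2 (a : ℕ → ℝ) (c : ℝ) :
    Tendsto (fun N : ℕ => (N : ℝ)⁻¹ * ∑ j ∈ range (Nat.primeCounting N), a j * lw j) atTop (𝓝 c) ↔
    Tendsto (fun n : ℕ => (∑ j ∈ range n, lw j * (a j - c)) / ∑ j ∈ range n, lw j) atTop (𝓝 0) := by
  have hth : Tendsto (fun N : ℕ => (∑ j ∈ range (Nat.primeCounting N), lw j) / (N : ℝ)) atTop (𝓝 1) := by
    refine (theta_pnt.comp tendsto_natCast_atTop_atTop).congr fun N => ?_
    simp [theta_eq]
  have hpos : ∀ n, 0 < n → 0 < ∑ j ∈ range n, lw j := fun n hn =>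
    sum_pos (fun j _ => lw_pos j) (by simp; omega)
  set R : ℕ → ℝ := fun n => (∑ j ∈ range n, a j * lw j) / ∑ j ∈ range n, lw j with hR
  have s1 : Tendsto (fun N : ℕ => (N : ℝ)⁻¹ * ∑ j ∈ range (Nat.primeCounting N), a j * lw j) atTop (𝓝 c) ↔
      Tendsto (fun N => R (Nat.primeCounting N)) atTop (𝓝 c) := by
    have ev : ∀ᶠ N : ℕ in atTop, 0 < ∑ j ∈ range (Nat.primeCounting N), lw j :=
      (Nat.tendsto_primeCounting.eventually (eventually_gt_atTop 0)).mono fun N h => hpos _ h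
    constructor
    · intro h
      have := h.div hth one_ne_zero
      rw [div_one] at this
      refine this.congr' ?_
      filter_upwards [ev, eventually_gt_atTop 0] with N h1 h2
      have : (N : ℝ) ≠ 0 := by positivity
      simp only [Pi.div_apply, hR]
      field_simp
    · intro h
      have := h.mul hth
      rw [mul_one] at this
      refine this.congr' ?_
      filter_upwards [ev] with N h1
      simp only [hR]
      field_simp
  have s2 : Tendsto (fun N => R (Nat.primeCounting N)) atTop (𝓝 c) ↔ Tendsto R atTop (𝓝 c) := by
    constructor
    · intro h
      have := h.comp nth_tendsto
      rw [← tendsto_add_atTop_iff_nat 1]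
      refine this.congr fun n => ?_
      simp [pi_nth]
    · intro h; exact h.comp Nat.tendsto_primeCounting
  rw [s1, s2, ← tendsto_sub_nhds_zero_iff]
  refine tendsto_congr' ?_
  filter_upwards [eventually_gt_atTop 0] with n hn
  have := (hpos n hn).ne'
  simp only [hR]
  rw [div_sub' this]
  congr 1
  rw [sum_mul, ← sum_sub_distrib]
  refine sum_congr rfl fun j _ => ?_
  ring

end PNT

/-- Let `(t_k)` be a sequence of reals. Then `(1/n) ∑_{j=1}^n t_{p_j}`
converges as `n → ∞` if and only if `(1/N) ∑_{j=1}^{π(N)} t_{p_j} log p_j` converges as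
`N → ∞`. -/
theorem stmt19 (t : ℕ → ℝ) :
    (∃ c : ℝ, Tendsto (fun n : ℕ =>
        (n : ℝ)⁻¹ * ∑ j ∈ range n, t (Nat.nth Nat.Prime j)) atTop (nhds c)) ↔
    (∃ c : ℝ, Tendsto (fun N : ℕ =>
        (N : ℝ)⁻¹ * ∑ j ∈ range (Nat.primeCounting N),
          t (Nat.nth Nat.Prime j) * Real.log (Nat.nth Nat.Prime j)) atTop (nhds c)) := by
  refine exists_congr fun c => ?_
  have h4 : 0 ≤ Real.log 4 := Real.log_nonneg (by norm_num)
  refine (PNT.shift1 (fun j => t (Nat.nth Nat.Prime j)) c).trans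
    (Iff.trans ?_ (PNT.shift2 (fun j => t (Nat.nth Nat.Prime j)) c).symm)
  exact ⟨PNT.toeplitz1 _ _ PNT.lw_mono PNT.lw_pos _ (by linarith) PNT.lw_bound,
    PNT.toeplitz2 _ _ PNT.lw_mono PNT.lw_pos⟩
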